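/- With the hitting-times setup below, lim_{i→∞} (t_{2i+2} − t_{2i})/(t_{2i} − t_{2i−2}) = δ. (Corollary 6.2(3).) -/

import Mathlib

open Real Filter Topology

/-!
If `y = Θ(x ^ d)` and `x → 0⁺`, then `log y = d * log x + O(1) ∼ d * log x`: on the logarithmic
scale, the multiplicative errors and the factor `a` become bounded additive terms. With `x = a * z`,
the two passages therefore give `log x (i + 1) ∼ δ₂ * log (ρ i) ∼ δ₁ * δ₂ * log (x i)`, while the
return time `-log (x i) / E₁ - log (ρ i) / E₂` is asymptotic to a fixed multiple of `log (x i)`.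
Hence consecutive return times have asymptotic ratio `δ₁ * δ₂`.
-/

section

open Asymptotics

variable {α : Type*} {l : Filter α} {u v x y : α → ℝ} {b c d p q M : ℝ}

lemma log_sub_log_le_of_abs_le_mul {r s C : ℝ} (hr : r ≠ 0) (hs : s ≠ 0)
    (h : |r| ≤ C * |s|) : log r - log s ≤ log C := by
  rw [← log_div hr hs, ← log_abs, abs_div]
  have hs' : 0 < |s| := abs_pos.2 hs
  exact log_le_log (by positivity) ((div_le_iff₀ hs').2 h)

lemma isBigO_log_sub_log_of_isTheta (h : u =Θ[l] v) (hv : ∀ᶠ i in l, v i ≠ 0) :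
    (fun i => log (u i) - log (v i)) =O[l] fun _ => (1 : ℝ) := by
  obtain ⟨C, huv⟩ := h.1.bound
  obtain ⟨C', hvu⟩ := h.2.bound
  refine .of_bound (max (log C) (log C')) ?_
  filter_upwards [huv, hvu, hv] with i huv hvu hv
  have hu : u i ≠ 0 := fun hu => hv (by simpa [hu] using hvu)
  rw [norm_one, mul_one, norm_eq_abs, abs_sub_le_iff]
  exact ⟨(log_sub_log_le_of_abs_le_mul hu hv huv).trans (le_max_left _ _),
    (log_sub_log_le_of_abs_le_mul hv hu hvu).trans (le_max_right _ _)⟩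

lemma isEquivalent_log_of_isTheta_rpow (hd : d ≠ 0) (hx : Tendsto x l (𝓝[>] 0))
    (h : y =Θ[l] fun i => x i ^ d) :
    (fun i => log (y i)) ~[l] fun i => d * log (x i) := by
  have hx0 : ∀ᶠ i in l, 0 < x i := hx.eventually self_mem_nhdsWithin
  have hlog : Tendsto (fun i => log (x i)) l atBot := tendsto_log_nhdsGT_zero.comp hx
  have hbdd : (fun i => log (y i) - d * log (x i)) =O[l] fun _ => (1 : ℝ) :=
    (isBigO_log_sub_log_of_isTheta h (hx0.mono fun i hi => (rpow_pos_of_pos hi d).ne')).congr'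
      (hx0.mono fun i hi => by simp only [log_rpow hi]) .rfl
  have hone : (fun _ => (1 : ℝ)) =o[l] fun i => log (x i) :=
    (isLittleO_one_left_iff ℝ).2 (tendsto_abs_atBot_atTop.comp hlog)
  exact (hbdd.trans_isLittleO hone).trans_isBigO (isBigO_self_const_mul hd _ l)

lemma tendsto_rpow_nhds_zero (hd : 0 < d) (hx : Tendsto x l (𝓝 0)) :
    Tendsto (fun i => x i ^ d) l (𝓝 0) := by
  simpa only [zero_rpow hd.ne'] using hx.rpow_const (.inr hd.le)

lemma tendsto_nhdsGT_zero_of_isBigO_rpow (hd : 0 < d) (hx : Tendsto x l (𝓝[>] 0))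
    (hy : ∀ᶠ i in l, 0 < y i) (h : y =O[l] fun i => x i ^ d) : Tendsto y l (𝓝[>] 0) :=
  tendsto_nhdsWithin_iff.2
    ⟨h.trans_tendsto (tendsto_rpow_nhds_zero hd (hx.mono_right nhdsWithin_le_nhds)), hy⟩

lemma isEquivalent_rpow_of_abs_sub_le (hpq : p < q) (hx : Tendsto x l (𝓝[>] 0))
    (h : ∀ᶠ i in l, |y i - x i ^ p| ≤ M * x i ^ q) : y ~[l] fun i => x i ^ p := by
  have hx0 : ∀ᶠ i in l, 0 < x i := hx.eventually self_mem_nhdsWithin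
  have hbig : (fun i => y i - x i ^ p) =O[l] fun i => x i ^ q := by
    refine .of_bound M ?_
    filter_upwards [h, hx0] with i hi hxi
    rwa [norm_eq_abs, norm_of_nonneg (rpow_nonneg hxi.le q)]
  have hlittle : (fun i => x i ^ q) =o[l] fun i => x i ^ p := by
    refine isLittleO_of_tendsto' (hx0.mono fun i hi h0 => absurd h0 (rpow_pos_of_pos hi p).ne') ?_
    have hpow : Tendsto (fun i => x i ^ (q - p)) l (𝓝 0) :=
      tendsto_rpow_nhds_zero (sub_pos.2 hpq) (hx.mono_right nhdsWithin_le_nhds)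
    exact hpow.congr' (hx0.mono fun i hi => rpow_sub hi q p)
  exact hbig.trans_isLittleO hlittle

lemma isEquivalent_const_mul_add_const_mul (hbcd : b + c * d ≠ 0) (h : v ~[l] fun i => d * u i) :
    (fun i => b * u i + c * v i) ~[l] fun i => (b + c * d) * u i := by
  have hv : (fun i => v i - d * u i) =o[l] u :=
    h.isLittleO.trans_isBigO (isBigO_const_mul_self d u l)
  refine ((hv.const_mul_left c).trans_isBigO (isBigO_self_const_mul hbcd u l)).congr_left ?_
  intro i
  simp only [Pi.sub_apply]
  ring

lemma tendsto_succ_div_of_isEquivalent_const_mul {L T : ℕ → ℝ} {k : ℝ} (hk : k ≠ 0)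
    (hL0 : ∀ᶠ i in atTop, L i ≠ 0) (hT : T ~[atTop] fun i => k * L i)
    (hL : (fun i => L (i + 1)) ~[atTop] fun i => d * L i) :
    Tendsto (fun i => T (i + 1) / T i) atTop (𝓝 d) := by
  have hTsucc : (fun i => T (i + 1)) ~[atTop] fun i => k * (d * L i) :=
    (hT.comp_tendsto (tendsto_add_atTop_nat 1)).trans (IsEquivalent.refl.mul hL)
  refine ((hTsucc.div hT).trans_eventuallyEq (hL0.mono fun i hi => ?_)).tendsto_const
  simp only [Pi.div_apply, Function.const_apply]
  field_simp

theorem stmt_6_general {E₁ E₂ δ₁ δ₂ : ℝ} (hE₁ : 0 < E₁) (hE₂ : 0 < E₂) (hδ₁ : 0 < δ₁)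
    (hδ₂ : 0 < δ₂) {x ρ t : ℕ → ℝ} (hx : Tendsto x atTop (𝓝[>] 0))
    (hρ0 : ∀ᶠ i in atTop, 0 < ρ i) (hρ : ρ =Θ[atTop] fun i => x i ^ δ₁)
    (hxρ : (fun i => x (i + 1)) =Θ[atTop] fun i => ρ i ^ δ₂)
    (htodd : ∀ i, t (2 * i + 1) - t (2 * i) = -(1 / E₁) * log (x i))
    (hteven : ∀ i, t (2 * i + 2) - t (2 * i + 1) = -(1 / E₂) * log (ρ i)) :
    Tendsto (fun i => (t (2 * i + 2) - t (2 * i)) / (t (2 * i) - t (2 * i - 2)))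
      atTop (𝓝 (δ₁ * δ₂)) := by
  have hρlim : Tendsto ρ atTop (𝓝[>] 0) := tendsto_nhdsGT_zero_of_isBigO_rpow hδ₁ hx hρ0 hρ.1
  have hlogρ : (fun i => log (ρ i)) ~[atTop] fun i => δ₁ * log (x i) :=
    isEquivalent_log_of_isTheta_rpow hδ₁.ne' hx hρ
  have hlogx : (fun i => log (x (i + 1))) ~[atTop] fun i => δ₁ * δ₂ * log (x i) :=
    ((isEquivalent_log_of_isTheta_rpow hδ₂.ne' hρlim hxρ).trans
      (IsEquivalent.refl.mul hlogρ)).congr_right (.of_eq (by ext i; simp only [Pi.mul_apply]; ring))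
  have hκ : -(1 / E₁) + -(1 / E₂) * δ₁ ≠ 0 := by
    have : 0 < 1 / E₁ + 1 / E₂ * δ₁ := by positivity
    linarith
  have hreturn : (fun i => t (2 * i + 2) - t (2 * i)) ~[atTop]
      fun i => (-(1 / E₁) + -(1 / E₂) * δ₁) * log (x i) :=
    (isEquivalent_const_mul_add_const_mul hκ hlogρ).congr_left
      (.of_forall fun i => by simp only [← htodd, ← hteven]; ring)
  have hlogx0 : ∀ᶠ i in atTop, log (x i) ≠ 0 :=
    (tendsto_log_nhdsGT_zero.comp hx).eventually_ne_atBot 0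
  rw [← tendsto_add_atTop_iff_nat 1]
  exact tendsto_succ_div_of_isEquivalent_const_mul hκ hlogx0 hreturn hlogx

end

/-- Hitting-times setup for an orbit in the basin of a Bykov attractor:
`z i` and `ρ i` are the height and radial coordinates of the successive hits
at the cross sections, and `t` is the sequence of hitting times. -/
theorem stmt_6
    (C₁ E₁ C₂ E₂ a ε M : ℝ)
    (hC₁ : C₁ > E₁) (hE₁ : E₁ > 0) (hC₂ : C₂ > E₂) (hE₂ : E₂ > 0)
    (ha : a ∈ Set.Ioo (0:ℝ) 1) (hε : ε ∈ Set.Ioo (0:ℝ) 1) (hM : M > 0)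
    (z ρ S U t : ℕ → ℝ)
    (hz01 : ∀ i, z i ∈ Set.Ioo (0:ℝ) 1) (hρ01 : ∀ i, ρ i ∈ Set.Ioo (0:ℝ) 1)
    (hzlim : Tendsto z atTop (𝓝 0))
    (hρdef : ∀ i, ρ i = (a * z i) ^ (C₁/E₁) + S i)
    (hS : ∀ i, |S i| ≤ M * (a * z i) ^ ((C₁/E₁) * (1+ε)))
    (hzdef : ∀ i, z (i+1) = (ρ i) ^ (C₂/E₂) + U i)
    (hU : ∀ i, |U i| ≤ M * (ρ i) ^ ((C₂/E₂) * (1+ε)))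
    (ht0 : t 0 = 0)
    (htodd : ∀ i, t (2*i+1) - t (2*i) = -(1/E₁) * Real.log (a * z i))
    (hteven : ∀ i, t (2*i+2) - t (2*i+1) = -(1/E₂) * Real.log (ρ i)) :
    Tendsto (fun i => (t (2*i+2) - t (2*i)) / (t (2*i) - t (2*i-2)))
      atTop (𝓝 ((C₁/E₁) * (C₂/E₂))) := by
  have hδ₁ : 0 < C₁ / E₁ := div_pos (hE₁.trans hC₁) hE₁
  have hδ₂ : 0 < C₂ / E₂ := div_pos (hE₂.trans hC₂) hE₂
  have one_lt : 1 < 1 + ε := lt_add_of_pos_right 1 hε.1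
  have hx : Tendsto (fun i => a * z i) atTop (𝓝[>] 0) :=
    tendsto_nhdsWithin_iff.2 ⟨by simpa using hzlim.const_mul a,
      .of_forall fun i => mul_pos ha.1 (hz01 i).1⟩
  have hρ0 : ∀ᶠ i in atTop, 0 < ρ i := .of_forall fun i => (hρ01 i).1
  have hρ : Asymptotics.IsEquivalent atTop ρ fun i => (a * z i) ^ (C₁ / E₁) :=
    isEquivalent_rpow_of_abs_sub_le (lt_mul_of_one_lt_right hδ₁ one_lt) hx
      (.of_forall fun i => by simpa only [hρdef i, add_sub_cancel_left] using hS i)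
  have hρlim : Tendsto ρ atTop (𝓝[>] 0) :=
    tendsto_nhdsGT_zero_of_isBigO_rpow hδ₁ hx hρ0 hρ.isBigO
  have hz : Asymptotics.IsEquivalent atTop (fun i => z (i + 1)) fun i => ρ i ^ (C₂ / E₂) :=
    isEquivalent_rpow_of_abs_sub_le (lt_mul_of_one_lt_right hδ₂ one_lt) hρlim
      (.of_forall fun i => by simpa only [hzdef i, add_sub_cancel_left] using hU i)
  exact stmt_6_general hE₁ hE₂ hδ₁ hδ₂ hx hρ0 hρ.isTheta
    (hz.isTheta.const_mul_left ha.1.ne') htodd hteven
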